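/- arXiv:1805.09395 — 3 statements merged into one kernel-verified Lean document; each statement's English description precedes it below -/
import Mathlib

section
/- Let ℓ be a positive integer. A complex number x satisfies Q(x) = 0 if and only if there exists a complex number z with z^ℓ = 1 and x = z + z⁻¹. -/
open Polynomial

/-- The Chebyshev polynomials of the second kind `P j`, defined by
`P 0 = 0`, `P 1 = 1`, `P (j+2) = X * P (j+1) - P j`. -/
noncomputable def chebP (R : Type*) [CommRing R] : ℕ → Polynomial R
  | 0 => 0
  | 1 => 1
  | (j + 2) => X * chebP R (j + 1) - chebP R j

/-- The polynomial `Q = X * P ℓ - 2 * P (ℓ-1) - 2`. -/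
noncomputable def chebQ (R : Type*) [CommRing R] (ℓ : ℕ) : Polynomial R :=
  X * chebP R ℓ - 2 * chebP R (ℓ - 1) - 2

theorem chebT_aux (x z w : ℂ) (hzw : z * w = 1) (hx : x = z + w) : ∀ n : ℕ,
    x * (chebP ℂ (n + 1)).eval x - 2 * (chebP ℂ n).eval x = z ^ (n + 1) + w ^ (n + 1)
  | 0 => by simp [chebP, hx]
  | 1 => by
    simp only [chebP, eval_sub, eval_mul, eval_X, eval_one, eval_zero]
    rw [hx]
    linear_combination 2 * hzw
  | (n + 2) => by
    have h0 := chebT_aux x z w hzw hx n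
    have h1 := chebT_aux x z w hzw hx (n + 1)
    have e3 : (chebP ℂ (n + 2 + 1)).eval x
        = x * (chebP ℂ (n + 2)).eval x - (chebP ℂ (n + 1)).eval x := by
      simp [chebP]
    have e2 : (chebP ℂ (n + 2)).eval x
        = x * (chebP ℂ (n + 1)).eval x - (chebP ℂ n).eval x := by
      simp [chebP]
    have h1' : x * (chebP ℂ (n + 2)).eval x - 2 * (chebP ℂ (n + 1)).eval x
        = z ^ (n + 2) + w ^ (n + 2) := h1
    rw [e3]
    linear_combination x * h1' - h0 - 2 * e2 + (z ^ (n + 2) + w ^ (n + 2)) * hx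
      + (z ^ (n + 1) + w ^ (n + 1)) * hzw

theorem chebQ_aux (n : ℕ) (x z w : ℂ) (hzw : z * w = 1) (hx : x = z + w) :
    (chebQ ℂ (n + 1)).eval x = 0 ↔ z ^ (n + 1) = 1 := by
  have h := chebT_aux x z w hzw hx n
  have hp : z ^ (n + 1) * w ^ (n + 1) = 1 := by rw [← mul_pow, hzw, one_pow]
  have e : (chebQ ℂ (n + 1)).eval x = z ^ (n + 1) + w ^ (n + 1) - 2 := by
    rw [← h]; simp [chebQ]
  rw [e]
  generalize z ^ (n + 1) = a at *
  generalize w ^ (n + 1) = b at *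
  constructor
  · intro h2
    have : (a - 1) ^ 2 = 0 := by linear_combination a * h2 - hp
    exact sub_eq_zero.mp (pow_eq_zero_iff (two_ne_zero) |>.mp this)
  · rintro rfl
    linear_combination hp

theorem stmt_3 (ℓ : ℕ) (hℓ : 1 ≤ ℓ) (x : ℂ) :
    (chebQ ℂ ℓ).eval x = 0 ↔ ∃ z : ℂ, z ^ ℓ = 1 ∧ x = z + z⁻¹ := by
  obtain ⟨n, rfl⟩ : ∃ n, ℓ = n + 1 := ⟨ℓ - 1, by omega⟩
  constructor
  · intro h
    obtain ⟨s, hs⟩ := IsAlgClosed.exists_pow_nat_eq (x ^ 2 - 4) (n := 2) (by norm_num)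
    have hzw : ((x + s) / 2) * ((x - s) / 2) = 1 := by linear_combination -hs / 4
    have hx : x = (x + s) / 2 + (x - s) / 2 := by ring
    refine ⟨(x + s) / 2, (chebQ_aux n x _ _ hzw hx).mp h, ?_⟩
    rw [← eq_inv_of_mul_eq_one_right hzw]
    exact hx
  · rintro ⟨z, hz, hx⟩
    have hz0 : z ≠ 0 := by
      rintro rfl
      simp at hz
    exact (chebQ_aux n x z z⁻¹ (mul_inv_cancel₀ hz0) hx).mpr hz
end

section
/- Let ℓ ≥ 3 be an odd integer and let ζ ∈ ℂ be a primitive ℓ-th root of unity. Then in ℂ[X] one has the factorization Q = (X − 2) · ∏_{j=1}^{(ℓ−1)/2} (X − ζ^j − ζ^{−j})². -/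
open Polynomial

theorem chebQ_aux_s4 (t s : ℂ) (h : t * s = 1) : ∀ n : ℕ,
    (t + s) * (chebP ℂ (n + 1)).eval (t + s) - 2 * (chebP ℂ n).eval (t + s)
      = t ^ (n + 1) + s ^ (n + 1)
  | 0 => by simp [chebP]
  | 1 => by simp [chebP]; linear_combination 2 * h
  | (n + 2) => by
    have h1 := chebQ_aux_s4 t s h n
    have h2 := chebQ_aux_s4 t s h (n + 1)
    have e1 : chebP ℂ (n + 2 + 1) = X * chebP ℂ (n + 2) - chebP ℂ (n + 1) := rfl
    have e2 : chebP ℂ (n + 2) = X * chebP ℂ (n + 1) - chebP ℂ n := rfl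
    rw [e1]
    simp only [eval_sub, eval_mul, eval_X]
    have e3 := congrArg (eval (t + s)) e2
    simp only [eval_sub, eval_mul, eval_X] at e3
    rw [show n + 1 + 1 = n + 2 from rfl] at h2
    linear_combination (t + s) * h2 - h1 - 2 * e3 + (t ^ (n + 1) + s ^ (n + 1)) * h

theorem prod_aux (m : ℕ) (ζ t : ℂ) (hζ : IsPrimitiveRoot ζ (2 * m + 1)) :
    t ^ (2 * m + 1) - 1 =
      (t - 1) * ∏ j ∈ Finset.Icc 1 m, ((t - ζ ^ j) * (t - ζ⁻¹ ^ j)) := by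
  have h := X_pow_sub_C_eq_prod hζ (Nat.succ_pos _) (one_pow (M := ℂ) (2 * m + 1))
  have h := congrArg (eval t) h
  have h0 : ζ ≠ 0 := hζ.ne_zero (Nat.succ_ne_zero _)
  simp only [eval_sub, eval_pow, eval_X, eval_C, eval_prod, mul_one] at h
  rw [h, Finset.prod_range_succ', mul_comm, pow_zero, two_mul, Finset.prod_range_add,
    ← Finset.prod_range_reflect (fun x => t - ζ ^ (m + x + 1)),
    ← Finset.prod_mul_distrib, Finset.range_eq_Ico,
    show Finset.Icc 1 m = Finset.Ico (0 + 1) (m + 1) by ext; simp,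
    ← Finset.prod_Ico_add' (fun j => (t - ζ ^ j) * (t - ζ⁻¹ ^ j)) 0 m 1]
  congr 1
  refine Finset.prod_congr rfl ?_
  intro j hj
  have hj := Finset.mem_Ico.1 hj
  congr 2
  rw [inv_pow]
  apply eq_inv_of_mul_eq_one_left
  rw [← pow_add, ← hζ.pow_eq_one]
  congr 1
  omega

theorem stmt_4 (ℓ : ℕ) (hodd : Odd ℓ) (hℓ : 3 ≤ ℓ) (ζ : ℂ)
    (hζ : IsPrimitiveRoot ζ ℓ) :
    chebQ ℂ ℓ =
      (X - C 2) * ∏ j ∈ Finset.Icc 1 ((ℓ - 1) / 2), (X - C (ζ ^ j + ζ⁻¹ ^ j)) ^ 2 := by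
  obtain ⟨m, rfl⟩ := hodd
  have h0 : ζ ≠ 0 := hζ.ne_zero (Nat.succ_ne_zero _)
  apply Polynomial.funext
  intro x
  obtain ⟨t, ht⟩ : ∃ t : ℂ, t * t - x * t + 1 = 0 := by
    obtain ⟨r, hr⟩ := IsAlgClosed.exists_pow_nat_eq (x ^ 2 - 4) (n := 2) (by norm_num)
    exact ⟨(x + r) / 2, by linear_combination hr / 4⟩
  have t0 : t ≠ 0 := by rintro rfl; simp at ht
  have hts : t * t⁻¹ = 1 := mul_inv_cancel₀ t0
  have hx : x = t + t⁻¹ := by field_simp; linear_combination -ht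
  have hL := chebQ_aux_s4 t t⁻¹ hts (2 * m)
  have hP := prod_aux m ζ t hζ
  rw [← hx] at hL
  have hm : (2 * m + 1 - 1) / 2 = m := by omega
  rw [hm]
  simp only [chebQ, eval_sub, eval_mul, eval_X, eval_C, eval_prod, eval_pow, eval_ofNat,
    Nat.add_sub_cancel]
  rw [hL]
  have hR : ∏ j ∈ Finset.Icc 1 m, (x - (ζ ^ j + ζ⁻¹ ^ j)) ^ 2 =
      (∏ j ∈ Finset.Icc 1 m, ((t - ζ ^ j) * (t - ζ⁻¹ ^ j))) ^ 2 * t⁻¹ ^ (2 * m) := by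
    have : t⁻¹ ^ (2 * m) = ∏ j ∈ Finset.Icc 1 m, t⁻¹ ^ 2 := by
      simp [pow_mul]
    rw [this, ← Finset.prod_pow, ← Finset.prod_mul_distrib]
    refine Finset.prod_congr rfl fun j _ => ?_
    rw [← mul_pow]
    congr 1
    have hz : ζ ^ j * ζ⁻¹ ^ j = 1 := by rw [← mul_pow, mul_inv_cancel₀ h0, one_pow]
    rw [hx]
    linear_combination (-t + ζ ^ j + ζ⁻¹ ^ j) * hts - t⁻¹ * hz
  rw [hR]
  set A := ∏ j ∈ Finset.Icc 1 m, ((t - ζ ^ j) * (t - ζ⁻¹ ^ j))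
  have h2 : x - 2 = (t - 1) ^ 2 * t⁻¹ := by
    rw [hx]; linear_combination (2 - t) * hts
  have hp : t ^ (2 * m + 1) * t⁻¹ ^ (2 * m + 1) = 1 := by rw [← mul_pow, hts, one_pow]
  rw [h2]
  calc _ = (t ^ (2 * m + 1) - 1) ^ 2 * t⁻¹ ^ (2 * m + 1) := by
        linear_combination (2 - t ^ (2 * m + 1)) * hp
    _ = _ := by rw [hP]; ring
end

section
/- Let ℓ ≥ 3 be an odd integer and let ζ ∈ ℂ be a primitive ℓ-th root of unity. Then the complex numbers ζ^j + ζ^{−j} for j = 0, 1, …, (ℓ−1)/2 are pairwise distinct; moreover, viewing Q as a polynomial over ℂ, the root 2 = ζ^0 + ζ^{−0} of Q has multiplicity 1, and for each 1 ≤ j ≤ (ℓ−1)/2 the root ζ^j + ζ^{−j} of Q has multiplicity 2. -/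
open Polynomial

lemma chebP_succ (R : Type*) [CommRing R] (j : ℕ) :
    chebP R (j + 2) = X * chebP R (j + 1) - chebP R j := by
  rw [chebP]

lemma chebP_double (R : Type*) [CommRing R] (m : ℕ) :
    chebP R (2 * m) = chebP R m * (2 * chebP R (m + 1) - X * chebP R m) ∧
    chebP R (2 * m + 1) = chebP R (m + 1) ^ 2 - chebP R m ^ 2 ∧
    chebP R (m + 1) ^ 2 + chebP R m ^ 2 - X * chebP R m * chebP R (m + 1) = 1 := by
  induction m with
  | zero => simp [chebP]
  | succ m ih =>
    obtain ⟨h1, h2, h3⟩ := ih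
    have e2 : chebP R (2 * (m + 1)) = X * chebP R (2 * m + 1) - chebP R (2 * m) :=
      chebP_succ R (2 * m)
    have e3 : chebP R (2 * (m + 1) + 1) = X * chebP R (2 * (m + 1)) - chebP R (2 * m + 1) :=
      chebP_succ R (2 * m + 1)
    have e4 : chebP R (m + 1 + 1) = X * chebP R (m + 1) - chebP R m := chebP_succ R m
    refine ⟨?_, ?_, ?_⟩
    · rw [e2, h1, h2, e4]; ring
    · rw [e3, e2, h1, h2, e4]; ring
    · rw [e4, ← h3]; ring

lemma chebQ_factor (R : Type*) [CommRing R] (m : ℕ) :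
    chebQ R (2 * m + 1) = (X - 2) * (chebP R (m + 1) + chebP R m) ^ 2 := by
  obtain ⟨h1, h2, h3⟩ := chebP_double R m
  rw [chebQ, Nat.add_sub_cancel, h1, h2]
  linear_combination 2 * h3

lemma chebP_eval (z w : ℂ) (h : z * w = 1) (n : ℕ) :
    (chebP ℂ n).eval (z + w) * (z - w) = z ^ n - w ^ n ∧
    (chebP ℂ (n + 1)).eval (z + w) * (z - w) = z ^ (n + 1) - w ^ (n + 1) := by
  induction n with
  | zero => simp [chebP]
  | succ n ih =>
    refine ⟨ih.2, ?_⟩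
    rw [chebP_succ]
    simp only [eval_sub, eval_mul, eval_X]
    linear_combination (z + w) * ih.2 - ih.1 + (z ^ n - w ^ n) * h

lemma chebP_eval_two (n : ℕ) :
    (chebP ℂ n).eval 2 = n ∧ (chebP ℂ (n + 1)).eval 2 = n + 1 := by
  induction n with
  | zero => simp [chebP]
  | succ n ih =>
    refine ⟨by simpa using ih.2, ?_⟩
    rw [chebP_succ]
    simp only [eval_sub, eval_mul, eval_X, ih.1, ih.2]
    push_cast; ring

lemma chebP_deg (n : ℕ) :
    (chebP ℂ n).natDegree ≤ n ∧ (chebP ℂ (n + 1)).natDegree ≤ n := by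
  induction n with
  | zero => simp [chebP]
  | succ n ih =>
    refine ⟨by omega, ?_⟩
    rw [chebP_succ]
    refine (natDegree_sub_le _ _).trans (max_le ?_ (by omega))
    refine natDegree_mul_le.trans ?_
    rw [natDegree_X]; omega

theorem stmt_5 (ℓ : ℕ) (hodd : Odd ℓ) (hℓ : 3 ≤ ℓ) (ζ : ℂ)
    (hζ : IsPrimitiveRoot ζ ℓ) :
    (∀ j₁ j₂ : ℕ, j₁ ≤ (ℓ - 1) / 2 → j₂ ≤ (ℓ - 1) / 2 → j₁ ≠ j₂ →
        ζ ^ j₁ + ζ⁻¹ ^ j₁ ≠ ζ ^ j₂ + ζ⁻¹ ^ j₂) ∧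
    (chebQ ℂ ℓ).rootMultiplicity 2 = 1 ∧
    (∀ j : ℕ, 1 ≤ j → j ≤ (ℓ - 1) / 2 →
        (chebQ ℂ ℓ).rootMultiplicity (ζ ^ j + ζ⁻¹ ^ j) = 2) := by
  obtain ⟨m, rfl⟩ := hodd
  have hm : (2 * m + 1 - 1) / 2 = m := by omega
  rw [hm]
  have h0 : ζ ≠ 0 := hζ.ne_zero (by omega)
  have hzw : ∀ j : ℕ, ζ ^ j * ζ⁻¹ ^ j = 1 := fun j => by
    rw [← mul_pow, mul_inv_cancel₀ h0, one_pow]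
  have hdist : ∀ j₁ j₂ : ℕ, j₁ ≤ m → j₂ ≤ m → j₁ ≠ j₂ →
        ζ ^ j₁ + ζ⁻¹ ^ j₁ ≠ ζ ^ j₂ + ζ⁻¹ ^ j₂ := by
    intro a b ha hb hab he
    have key : (ζ ^ a - ζ ^ b) * (ζ ^ (a + b) - 1) = 0 := by
      rw [pow_add]
      linear_combination ζ ^ a * ζ ^ b * he - ζ ^ b * hzw a + ζ ^ a * hzw b
    rcases mul_eq_zero.1 key with h | h
    · exact hab (hζ.pow_inj (by omega) (by omega) (sub_eq_zero.1 h))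
    · have := Nat.eq_zero_of_dvd_of_lt (hζ.dvd_of_pow_eq_one _ (sub_eq_zero.1 h)) (by omega)
      omega
  set W : ℂ[X] := chebP ℂ (m + 1) + chebP ℂ m with hW
  have hW2 : W.eval 2 ≠ 0 := by
    rw [hW, eval_add, (chebP_eval_two m).1, (chebP_eval_two m).2]
    norm_cast; omega
  have hW0 : W ≠ 0 := by
    intro h; rw [h] at hW2; simp at hW2
  have hroot : ∀ j : ℕ, 1 ≤ j → j ≤ m → W.IsRoot (ζ ^ j + ζ⁻¹ ^ j) := by
    intro j h1 h2
    have hne : ζ ^ j - ζ⁻¹ ^ j ≠ 0 := by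
      intro h
      have : ζ ^ (j + j) = 1 := by
        rw [pow_add]
        linear_combination ζ ^ j * h + hzw j
      have := Nat.eq_zero_of_dvd_of_lt (hζ.dvd_of_pow_eq_one _ this) (by omega)
      omega
    obtain ⟨e1, e2⟩ := chebP_eval (ζ ^ j) (ζ⁻¹ ^ j) (hzw j) m
    have hp : (ζ ^ j) ^ (2 * m + 1) = 1 := by
      rw [← pow_mul, mul_comm, pow_mul, hζ.pow_eq_one, one_pow]
    have hwz := hzw j
    generalize ζ ^ j = z at *
    generalize ζ⁻¹ ^ j = w at *
    have q1 : z ^ m * w ^ m = 1 := by rw [← mul_pow, hwz, one_pow]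
    have q2 : z ^ (m + 1) * w ^ (m + 1) = 1 := by rw [← mul_pow, hwz, one_pow]
    have q3 : z ^ m * z ^ (m + 1) = 1 := by rw [← pow_add, ← hp]; congr 1; omega
    have r1 : w ^ m = z ^ (m + 1) := by
      linear_combination z ^ (m + 1) * q1 - w ^ m * q3
    have r2 : w ^ (m + 1) = z ^ m := by
      linear_combination z ^ m * q2 - w ^ (m + 1) * q3
    rw [r1] at e1
    rw [r2] at e2
    have : W.eval (z + w) * (z - w) = 0 := by
      rw [hW, eval_add]; linear_combination e1 + e2
    exact (mul_eq_zero.1 this).resolve_right hne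
  have hdeg : W.natDegree ≤ m :=
    (natDegree_add_le _ _).trans (max_le (chebP_deg m).2 (chebP_deg m).1)
  have hQ : chebQ ℂ (2 * m + 1) = (X - C 2) * W ^ 2 := by
    rw [chebQ_factor]; rfl
  have hQ0 : (X - C (2:ℂ)) * W ^ 2 ≠ 0 := mul_ne_zero (X_sub_C_ne_zero _) (pow_ne_zero _ hW0)
  have hmul : ∀ x : ℂ, (chebQ ℂ (2 * m + 1)).rootMultiplicity x =
      (X - C (2:ℂ)).rootMultiplicity x + 2 * W.rootMultiplicity x := by
    intro x
    rw [hQ, rootMultiplicity_mul hQ0, ← count_roots (W ^ 2), roots_pow, Multiset.count_nsmul,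
      count_roots]
  have hW1 : ∀ x : ℂ, W.rootMultiplicity x ≤ 1 := by
    intro x
    let S : Finset ℂ := (Finset.Icc 1 m).image (fun j => ζ ^ j + ζ⁻¹ ^ j)
    have hS : S.card = m := by
      rw [Finset.card_image_of_injOn]
      · simp
      · intro a ha b hb h
        simp only [Finset.coe_Icc, Set.mem_Icc] at ha hb
        by_contra hab
        exact hdist a b ha.2 hb.2 hab h
    have hle : S.val ≤ W.roots := by
      rw [Multiset.le_iff_subset S.nodup]
      intro y hy
      obtain ⟨j, hj, rfl⟩ := Finset.mem_image.1 (Finset.mem_def.2 hy)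
      rw [Finset.mem_Icc] at hj
      exact (mem_roots hW0).2 (hroot j hj.1 hj.2)
    have heq : S.val = W.roots := Multiset.eq_of_le_of_card_le hle
      ((card_roots' W).trans (hdeg.trans hS.ge))
    rw [← count_roots, ← heq]
    exact Multiset.nodup_iff_count_le_one.1 S.nodup x
  refine ⟨hdist, ?_, ?_⟩
  · rw [hmul, rootMultiplicity_X_sub_C_self, rootMultiplicity_eq_zero hW2]
  · intro j h1 h2
    have hx : ζ ^ j + ζ⁻¹ ^ j ≠ 2 := by
      have := hdist j 0 h2 (by omega) (by omega)
      norm_num at this ⊢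
      exact this
    have := (rootMultiplicity_pos hW0).2 (hroot j h1 h2)
    have := hW1 (ζ ^ j + ζ⁻¹ ^ j)
    have h3 : (X - C (2:ℂ)).rootMultiplicity (ζ ^ j + ζ⁻¹ ^ j) = 0 := by
      apply rootMultiplicity_eq_zero
      simp only [IsRoot, eval_sub, eval_X, eval_C]
      exact sub_ne_zero.2 hx
    rw [hmul, h3]; omega
end
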